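/- arXiv:2605.27219 — 2 statements merged into one kernel-verified Lean document; each statement's English description precedes it below -/
import Mathlib

section
/- For k = 1, …, K let Ã^(k) be a real n_a×d̃_k matrix, let Q^(k) be a real n_a×r_k matrix with orthonormal columns whose column space equals the column space of Ã^(k), and set W_Q = [Q^(1), …, Q^(K)] ∈ ℝ^{n_a×(r_1+⋯+r_K)} (horizontal concatenation). Let d̂ ≤ n_a, and let λ_1 ≥ … ≥ λ_{n_a} be the eigenvalues of W_Q W_Qᵀ counted with multiplicity. Then the minimum of Σ_{k=1}^K ‖Ã^(k)G^(k) − Z‖_F² over all Z ∈ ℝ^{n_a×d̂} with ZᵀZ = I_{d̂} and all G^(k) ∈ ℝ^{d̃_k×d̂} equals K·d̂ − Σ_{j=1}^{d̂} λ_j. Moreover, for any d̂×d̂ orthogonal matrix O, this minimum is attained at Z* = U_{d̂}O, where the columns of U_{d̂} are orthonormal eigenvectors of W_Q W_Qᵀ corresponding to λ_1, …, λ_{d̂}, together with any G^(k) satisfying Ã^(k)G^(k) = Q^(k)Q^(k)ᵀZ*. -/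
open Matrix

/-- Squared Frobenius norm of a real matrix: `‖M‖_F² = tr(MᵀM)`. -/
noncomputable def frobSq {n m : ℕ} (M : Matrix (Fin n) (Fin m) ℝ) : ℝ := (Mᵀ * M).trace

/-!
For fixed `Z`, Pythagoras splits `‖Q^(k)Y − Z‖_F²` into the squared distance from `Z` to the column
space of `Q^(k)`, which is `d̂ − tr(ZᵀQ^(k)Q^(k)ᵀZ)`, and a square that vanishes at `Y = Q^(k)ᵀZ`.
Summing over `k` leaves the maximisation of `tr(ZᵀW_QW_QᵀZ)` over orthonormal `Z`, which is Ky Fan's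
principle: in the eigenbasis the trace is a sum of eigenvalues with weights in `[0, 1]` of total
mass `d̂`, and such a sum is largest when all the mass sits on the `d̂` leading eigenvalues.
-/

section CommSemiring

variable {R m n p d ι : Type*} [CommSemiring R]

/-- The squared Frobenius norm `tr(MᵀM)` over an arbitrary commutative semiring, with no square root
taken; over `ℝ` it is `frobSq`. -/
def frobeniusSq [Fintype m] [Fintype d] (M : Matrix m d R) : R := (Mᵀ * M).trace

theorem frobeniusSq_of_transpose_mul_self_eq_one [Fintype n] [Fintype d] [DecidableEq d]
    {Z : Matrix n d R} (hZ : Zᵀ * Z = 1) : frobeniusSq Z = Fintype.card d := by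
  rw [frobeniusSq, hZ, trace_one]

theorem exists_eq_mul_of_span_le [Fintype p] {A : Matrix n m R} {B : Matrix n p R}
    (h : Submodule.span R (Set.range Aᵀ) ≤ Submodule.span R (Set.range Bᵀ)) :
    ∃ C : Matrix p m R, A = B * C := by
  have mem_range (j : m) : Aᵀ j ∈ LinearMap.range B.mulVecLin := by
    rw [Matrix.range_mulVecLin]
    exact h (Submodule.subset_span (Set.mem_range_self j))
  choose c hc using mem_range
  refine ⟨(Matrix.of c)ᵀ, ?_⟩
  ext i j
  exact (congrFun (hc j) i).symm

theorem mul_transpose_eq_sum [Fintype ι] {r : ι → Type*} [∀ k, Fintype (r k)]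
    {W : Matrix n ((k : ι) × r k) R} {Q : (k : ι) → Matrix n (r k) R}
    (hW : ∀ i k j, W i ⟨k, j⟩ = Q k i j) : W * Wᵀ = ∑ k, Q k * (Q k)ᵀ := by
  ext i j
  simp only [Matrix.sum_apply, Matrix.mul_apply, Fintype.sum_sigma, transpose_apply, hW]

theorem transpose_mul_self_mul_eq_one [Fintype m] [Fintype n] [DecidableEq n] [DecidableEq p]
    {A : Matrix m n R} {B : Matrix n p R} (hA : Aᵀ * A = 1) (hB : Bᵀ * B = 1) :
    (A * B)ᵀ * (A * B) = 1 := by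
  rw [transpose_mul, Matrix.mul_assoc, ← Matrix.mul_assoc Aᵀ, hA, Matrix.one_mul, hB]

variable [Fintype m] [DecidableEq n] [DecidableEq d] {U : Matrix m n R}

theorem transpose_mul_self_submatrix_embedding (hU : Uᵀ * U = 1) (e : d ↪ n) :
    (U.submatrix id e)ᵀ * U.submatrix id e = 1 := by
  rw [transpose_submatrix, ← submatrix_mul _ _ _ _ _ Function.bijective_id, hU,
    submatrix_one_embedding]

theorem trace_eigenvectors_mul_orthogonal [Fintype n] [Fintype d] (hU : Uᵀ * U = 1) {μ : n → R}
    (e : d ↪ n) {O : Matrix d d R} (hO : Oᵀ * O = 1) :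
    ((U.submatrix id e * O)ᵀ * (U * diagonal μ * Uᵀ) * (U.submatrix id e * O)).trace =
      ∑ j, μ (e j) := by
  set S := U.submatrix id e
  have transpose_mul_S : Uᵀ * S = (1 : Matrix n n R).submatrix id e := by
    rw [← hU, submatrix_mul _ _ _ _ _ Function.bijective_id, submatrix_id_id]
  have compression : Sᵀ * (U * diagonal μ * Uᵀ) * S = diagonal (μ ∘ e) := by
    calc Sᵀ * (U * diagonal μ * Uᵀ) * S = (Uᵀ * S)ᵀ * diagonal μ * (Uᵀ * S) := by
          simp only [transpose_mul, transpose_transpose, Matrix.mul_assoc]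
      _ = (1 * diagonal μ * 1).submatrix e e := by
          simp only [transpose_mul_S, submatrix_mul _ _ _ _ _ Function.bijective_id,
            transpose_submatrix, transpose_one, submatrix_id_id]
      _ = diagonal (μ ∘ e) := by
          rw [Matrix.one_mul, Matrix.mul_one, submatrix_diagonal_embedding]
  calc ((S * O)ᵀ * (U * diagonal μ * Uᵀ) * (S * O)).trace
      = (Oᵀ * (Sᵀ * (U * diagonal μ * Uᵀ) * S) * O).trace := by
        simp only [transpose_mul, Matrix.mul_assoc]
    _ = (O * Oᵀ * diagonal (μ ∘ e)).trace := by rw [compression, trace_mul_cycle]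
    _ = ∑ j, μ (e j) := by
        rw [mul_eq_one_comm.1 hO, Matrix.one_mul, trace_diagonal]
        rfl

end CommSemiring

section CommRing

variable {R n p d ι : Type*} [CommRing R]

/-- The objective `Σ_k ‖A^(k)G^(k) − Z‖_F²` of linear kernel integration. -/
def lkiLoss [Fintype ι] [Fintype n] [Fintype d] {p : ι → Type*} [∀ k, Fintype (p k)]
    (A : (k : ι) → Matrix n (p k) R) (G : (k : ι) → Matrix (p k) d R) (Z : Matrix n d R) : R :=
  ∑ k, frobeniusSq (A k * G k - Z)

theorem frobeniusSq_mul_sub [Fintype n] [Fintype p] [DecidableEq p] [Fintype d]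
    {Q : Matrix n p R} (hQ : Qᵀ * Q = 1) (Y : Matrix p d R) (Z : Matrix n d R) :
    frobeniusSq (Q * Y - Z) =
      frobeniusSq Z - (Zᵀ * (Q * Qᵀ) * Z).trace + frobeniusSq (Y - Qᵀ * Z) := by
  have gram_mul : (Q * Y)ᵀ * (Q * Y) = Yᵀ * Y := by
    rw [transpose_mul, Matrix.mul_assoc, ← Matrix.mul_assoc Qᵀ, hQ, Matrix.one_mul]
  have gram_split : (Q * Y - Z)ᵀ * (Q * Y - Z) =
      Zᵀ * Z - Zᵀ * (Q * Qᵀ) * Z + (Y - Qᵀ * Z)ᵀ * (Y - Qᵀ * Z) := by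
    simp only [transpose_sub, Matrix.sub_mul, Matrix.mul_sub, gram_mul]
    simp only [transpose_mul, transpose_transpose, Matrix.mul_assoc]
    abel
  simp only [frobeniusSq, gram_split, trace_add, trace_sub]

theorem frobeniusSq_projection_sub [Fintype n] [Fintype p] [DecidableEq p] [Fintype d]
    {Q : Matrix n p R} (hQ : Qᵀ * Q = 1) (Z : Matrix n d R) :
    frobeniusSq (Q * Qᵀ * Z - Z) = frobeniusSq Z - (Zᵀ * (Q * Qᵀ) * Z).trace := by
  rw [Matrix.mul_assoc Q, frobeniusSq_mul_sub hQ, sub_self]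
  simp only [frobeniusSq, Matrix.mul_zero, trace_zero, add_zero]

theorem sum_frobeniusSq_sub_trace [Fintype ι] [Fintype n] [Fintype d] [DecidableEq d]
    {r : ι → Type*} [∀ k, Fintype (r k)] {W : Matrix n ((k : ι) × r k) R}
    {Q : (k : ι) → Matrix n (r k) R} (hW : ∀ i k j, W i ⟨k, j⟩ = Q k i j)
    {Z : Matrix n d R} (hZ : Zᵀ * Z = 1) :
    ∑ k, (frobeniusSq Z - (Zᵀ * (Q k * (Q k)ᵀ) * Z).trace) =
      Fintype.card ι * Fintype.card d - (Zᵀ * (W * Wᵀ) * Z).trace := by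
  rw [mul_transpose_eq_sum hW, Matrix.mul_sum, Matrix.sum_mul, trace_sum, Finset.sum_sub_distrib,
    Finset.sum_const, Finset.card_univ, nsmul_eq_mul, frobeniusSq_of_transpose_mul_self_eq_one hZ]

theorem lkiLoss_of_eq_projection [Fintype ι] [Fintype n] [Fintype d] [DecidableEq d]
    {p r : ι → Type*} [∀ k, Fintype (p k)] [∀ k, Fintype (r k)] [∀ k, DecidableEq (r k)]
    {A : (k : ι) → Matrix n (p k) R} {Q : (k : ι) → Matrix n (r k) R}
    (hQ : ∀ k, (Q k)ᵀ * Q k = 1) {W : Matrix n ((k : ι) × r k) R}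
    (hW : ∀ i k j, W i ⟨k, j⟩ = Q k i j) {Z : Matrix n d R} (hZ : Zᵀ * Z = 1)
    {G : (k : ι) → Matrix (p k) d R} (hG : ∀ k, A k * G k = Q k * (Q k)ᵀ * Z) :
    lkiLoss A G Z = Fintype.card ι * Fintype.card d - (Zᵀ * (W * Wᵀ) * Z).trace := by
  simp only [lkiLoss, hG, frobeniusSq_projection_sub (hQ _), sum_frobeniusSq_sub_trace hW hZ]

end CommRing

section LinearOrder

variable {R m n d ι : Type*} [CommRing R] [LinearOrder R] [IsStrictOrderedRing R]

theorem mul_transpose_self_diag_nonneg [Fintype n] (M : Matrix m n R) (i : m) :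
    0 ≤ (M * Mᵀ) i i :=
  Finset.sum_nonneg fun j _ ↦ mul_self_nonneg (M i j)

theorem frobeniusSq_nonneg [Fintype m] [Fintype n] (M : Matrix m n R) : 0 ≤ frobeniusSq M :=
  Finset.sum_nonneg fun j _ ↦ mul_transpose_self_diag_nonneg Mᵀ j

theorem le_lkiLoss [Fintype ι] [Fintype n] [Fintype d] [DecidableEq d] {p r : ι → Type*}
    [∀ k, Fintype (p k)] [∀ k, Fintype (r k)] [∀ k, DecidableEq (r k)]
    {A : (k : ι) → Matrix n (p k) R} {Q : (k : ι) → Matrix n (r k) R}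
    (hQ : ∀ k, (Q k)ᵀ * Q k = 1)
    (hcol : ∀ k, Submodule.span R (Set.range (A k)ᵀ) ≤ Submodule.span R (Set.range (Q k)ᵀ))
    {W : Matrix n ((k : ι) × r k) R} (hW : ∀ i k j, W i ⟨k, j⟩ = Q k i j)
    {Z : Matrix n d R} (hZ : Zᵀ * Z = 1) (G : (k : ι) → Matrix (p k) d R) :
    Fintype.card ι * Fintype.card d - (Zᵀ * (W * Wᵀ) * Z).trace ≤ lkiLoss A G Z := by
  rw [← sum_frobeniusSq_sub_trace hW hZ]
  refine Finset.sum_le_sum fun k _ ↦ ?_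
  obtain ⟨C, hC⟩ := exists_eq_mul_of_span_le (hcol k)
  rw [hC, Matrix.mul_assoc (Q k) C, frobeniusSq_mul_sub (hQ k)]
  exact le_add_of_nonneg_right (frobeniusSq_nonneg _)

theorem mul_transpose_self_diag_le_one [Fintype n] [Fintype d] [DecidableEq d]
    {V : Matrix n d R} (hV : Vᵀ * V = 1) (i : n) : (V * Vᵀ) i i ≤ 1 := by
  classical
  have idempotent : V * Vᵀ * (V * Vᵀ) = V * Vᵀ := by
    rw [Matrix.mul_assoc, ← Matrix.mul_assoc Vᵀ, hV, Matrix.one_mul]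
  have complement_gram : (1 - V * Vᵀ) * (1 - V * Vᵀ)ᵀ = 1 - V * Vᵀ := by
    simp only [transpose_sub, transpose_one, transpose_mul, transpose_transpose, Matrix.sub_mul,
      Matrix.mul_sub, Matrix.one_mul, Matrix.mul_one, idempotent]
    abel
  have diag_nonneg := mul_transpose_self_diag_nonneg (1 - V * Vᵀ) i
  rwa [complement_gram, Matrix.sub_apply, one_apply_eq, sub_nonneg] at diag_nonneg

theorem exists_threshold {α : Type*} [LinearOrder α] [Nonempty α] [Finite n] {s : Finset n}
    {μ : n → α} (hs : ∀ i ∈ s, ∀ j ∉ s, μ j ≤ μ i) :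
    ∃ c, (∀ i ∈ s, c ≤ μ i) ∧ ∀ j ∉ s, μ j ≤ c := by
  obtain rfl | s_nonempty := s.eq_empty_or_nonempty
  · obtain ⟨c, hc⟩ := (Set.finite_range μ).bddAbove
    exact ⟨c, by simp, fun j _ ↦ hc (Set.mem_range_self j)⟩
  · obtain ⟨i, hi, i_min⟩ := s.exists_min_image μ s_nonempty
    exact ⟨μ i, i_min, hs i hi⟩

theorem sum_mul_le_sum_of_weights [Fintype n] {s : Finset n} {μ w : n → R}
    (hs : ∀ i ∈ s, ∀ j ∉ s, μ j ≤ μ i) (w_nonneg : ∀ i, 0 ≤ w i) (w_le_one : ∀ i, w i ≤ 1)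
    (sum_w : ∑ i, w i = s.card) : ∑ i, μ i * w i ≤ ∑ i ∈ s, μ i := by
  classical
  -- Both sides carry the same total mass, so `μ` may be shifted by a threshold `c`; the shifted
  -- inequality holds term by term.
  obtain ⟨c, c_le, le_c⟩ := exists_threshold hs
  have termwise (i : n) : (μ i - c) * w i ≤ if i ∈ s then μ i - c else 0 := by
    split_ifs with hi
    · exact mul_le_of_le_one_right (sub_nonneg.2 (c_le i hi)) (w_le_one i)
    · exact mul_nonpos_of_nonpos_of_nonneg (sub_nonpos.2 (le_c i hi)) (w_nonneg i)
  have shifted : ∑ i, (μ i - c) * w i ≤ ∑ i ∈ s, (μ i - c) := by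
    simpa [Finset.sum_ite_mem] using Finset.sum_le_sum fun i (_ : i ∈ Finset.univ) ↦ termwise i
  simp only [sub_mul, Finset.sum_sub_distrib, ← Finset.mul_sum, sum_w, Finset.sum_const,
    nsmul_eq_mul] at shifted
  linarith

variable [Fintype n] [DecidableEq n] [Fintype d] [DecidableEq d] {μ : n → R} {e : d ↪ n}

theorem trace_transpose_mul_diagonal_mul_le (he : ∀ i ∉ Set.range e, ∀ j, μ i ≤ μ (e j))
    {V : Matrix n d R} (hV : Vᵀ * V = 1) :
    (Vᵀ * diagonal μ * V).trace ≤ ∑ j, μ (e j) := by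
  have trace_eq : (Vᵀ * diagonal μ * V).trace = ∑ i, μ i * (V * Vᵀ) i i := by
    rw [trace_mul_cycle, trace_mul_comm]
    exact Finset.sum_congr rfl fun i _ ↦ diagonal_mul μ (V * Vᵀ) i i
  have sum_weights : ∑ i, (V * Vᵀ) i i = (Finset.univ.map e).card := by
    calc ∑ i, (V * Vᵀ) i i = (Vᵀ * V).trace := trace_mul_comm V Vᵀ
      _ = (Finset.univ.map e).card := by
        rw [hV, trace_one, Finset.card_map, Finset.card_univ]
  have leading : ∀ i ∈ Finset.univ.map e, ∀ j ∉ Finset.univ.map e, μ j ≤ μ i := by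
    simpa only [Finset.mem_map, Finset.mem_univ, true_and, Set.mem_range,
      forall_exists_index, forall_apply_eq_imp_iff] using fun j i hi ↦ he i hi j
  rw [trace_eq, ← Finset.sum_map Finset.univ e μ]
  exact sum_mul_le_sum_of_weights leading (mul_transpose_self_diag_nonneg V)
    (mul_transpose_self_diag_le_one hV) sum_weights

theorem trace_transpose_mul_mul_le {U : Matrix n n R} (hU : Uᵀ * U = 1)
    (he : ∀ i ∉ Set.range e, ∀ j, μ i ≤ μ (e j)) {Z : Matrix n d R} (hZ : Zᵀ * Z = 1) :
    (Zᵀ * (U * diagonal μ * Uᵀ) * Z).trace ≤ ∑ j, μ (e j) := by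
  have hUt : Uᵀᵀ * Uᵀ = 1 := by rw [transpose_transpose, mul_eq_one_comm.1 hU]
  simpa only [transpose_mul, transpose_transpose, Matrix.mul_assoc] using
    trace_transpose_mul_diagonal_mul_le he (transpose_mul_self_mul_eq_one hUt hZ)

theorem stmt4_general [Fintype ι] {p r : ι → Type*} [∀ k, Fintype (p k)] [∀ k, Fintype (r k)]
    [∀ k, DecidableEq (r k)]
    (A : (k : ι) → Matrix n (p k) R) (Q : (k : ι) → Matrix n (r k) R)
    (hQ : ∀ k, (Q k)ᵀ * Q k = 1)
    (hcol : ∀ k, Submodule.span R (Set.range (A k)ᵀ) = Submodule.span R (Set.range (Q k)ᵀ))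
    (W : Matrix n ((k : ι) × r k) R) (hW : ∀ i k j, W i ⟨k, j⟩ = Q k i j)
    (U : Matrix n n R) (hU : Uᵀ * U = 1) (μ : n → R)
    (e : d ↪ n) (he : ∀ i ∉ Set.range e, ∀ j, μ i ≤ μ (e j))
    (hdiag : W * Wᵀ = U * diagonal μ * Uᵀ) :
    IsLeast {t : R | ∃ (Z : Matrix n d R) (G : (k : ι) → Matrix (p k) d R),
        Zᵀ * Z = 1 ∧ t = lkiLoss A G Z}
      (Fintype.card ι * Fintype.card d - ∑ j, μ (e j)) ∧
    ∀ O : Matrix d d R, Oᵀ * O = 1 →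
      (U.submatrix id e * O)ᵀ * (U.submatrix id e * O) = 1 ∧
      (∃ G : (k : ι) → Matrix (p k) d R,
        ∀ k, A k * G k = Q k * (Q k)ᵀ * (U.submatrix id e * O)) ∧
      ∀ G : (k : ι) → Matrix (p k) d R,
        (∀ k, A k * G k = Q k * (Q k)ᵀ * (U.submatrix id e * O)) →
        lkiLoss A G (U.submatrix id e * O) =
          Fintype.card ι * Fintype.card d - ∑ j, μ (e j) := by
  have orthonormal {O : Matrix d d R} (hO : Oᵀ * O = 1) :=
    transpose_mul_self_mul_eq_one (transpose_mul_self_submatrix_embedding hU e) hO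
  have exists_fit (Z : Matrix n d R) :
      ∃ G : (k : ι) → Matrix (p k) d R, ∀ k, A k * G k = Q k * (Q k)ᵀ * Z := by
    choose C hC using fun k ↦ exists_eq_mul_of_span_le (hcol k).ge
    exact ⟨fun k ↦ C k * ((Q k)ᵀ * Z), fun k ↦ by
      rw [← Matrix.mul_assoc, ← hC, Matrix.mul_assoc]⟩
  have loss_eq {O : Matrix d d R} (hO : Oᵀ * O = 1) {G : (k : ι) → Matrix (p k) d R}
      (hG : ∀ k, A k * G k = Q k * (Q k)ᵀ * (U.submatrix id e * O)) :
      lkiLoss A G (U.submatrix id e * O) =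
        Fintype.card ι * Fintype.card d - ∑ j, μ (e j) := by
    rw [lkiLoss_of_eq_projection hQ hW (orthonormal hO) hG, hdiag,
      trace_eigenvectors_mul_orthogonal hU e hO]
  refine ⟨⟨?_, ?_⟩, fun O hO ↦ ⟨orthonormal hO, exists_fit _, fun _ ↦ loss_eq hO⟩⟩
  · have h_one : (1 : Matrix d d R)ᵀ * 1 = 1 := by rw [transpose_one, Matrix.one_mul]
    obtain ⟨G, hG⟩ := exists_fit (U.submatrix id e * (1 : Matrix d d R))
    exact ⟨_, G, orthonormal h_one, (loss_eq h_one hG).symm⟩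
  · rintro _ ⟨Z, G, hZ, rfl⟩
    calc Fintype.card ι * Fintype.card d - ∑ j, μ (e j)
        ≤ Fintype.card ι * Fintype.card d - (Zᵀ * (W * Wᵀ) * Z).trace := by
          rw [hdiag]
          exact sub_le_sub_left (trace_transpose_mul_mul_le hU he hZ) _
      _ ≤ lkiLoss A G Z := le_lkiLoss hQ (fun k ↦ (hcol k).le) hW hZ G

end LinearOrder

theorem le_castLEEmb_of_notMem_range {α : Type*} [Preorder α] {m n : ℕ} (h : m ≤ n) {μ : Fin n → α}
    (hμ : Antitone μ) (i : Fin n) (hi : i ∉ Set.range (Fin.castLEEmb h)) (j : Fin m) :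
    μ i ≤ μ (Fin.castLEEmb h j) := by
  rw [Fin.coe_castLEEmb, Fin.range_castLE, Set.mem_ofPred_eq, not_lt] at hi
  exact hμ (Fin.le_def.2 (j.isLt.le.trans hi))

/-- Theorem 1, linear kernel integration: with `Q^(k)` orthonormal bases of the
column spaces of `Ã^(k)`, `W_Q` their horizontal concatenation, and
`W_Q W_Qᵀ = U diag(μ) Uᵀ` an orthogonal eigendecomposition with `μ` antitone, the minimum of
`Σ_k ‖Ã^(k)G^(k) − Z‖_F²` over `ZᵀZ = I` and all `G^(k)` equals `K·d̂ − Σ_{j<d̂} μ_j`, and for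
any orthogonal `O` it is attained at `Z* = U_{d̂}O` together with any `G^(k)` satisfying
`Ã^(k)G^(k) = Q^(k)Q^(k)ᵀZ*`. -/
theorem stmt4 {K na dhat : ℕ} (hd : dhat ≤ na)
    (dt r : Fin K → ℕ)
    (At : (k : Fin K) → Matrix (Fin na) (Fin (dt k)) ℝ)
    (Q : (k : Fin K) → Matrix (Fin na) (Fin (r k)) ℝ)
    (hQ : ∀ k, (Q k)ᵀ * Q k = 1)
    (hcol : ∀ k, Submodule.span ℝ (Set.range (At k)ᵀ) = Submodule.span ℝ (Set.range (Q k)ᵀ))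
    (WQ : Matrix (Fin na) ((k : Fin K) × Fin (r k)) ℝ)
    (hWQ : ∀ (i : Fin na) (k : Fin K) (j : Fin (r k)), WQ i ⟨k, j⟩ = Q k i j)
    (U : Matrix (Fin na) (Fin na) ℝ) (hU : Uᵀ * U = 1)
    (μ : Fin na → ℝ) (hμ : Antitone μ)
    (hdiag : WQ * WQᵀ = U * Matrix.diagonal μ * Uᵀ) :
    IsLeast {t : ℝ | ∃ (Z : Matrix (Fin na) (Fin dhat) ℝ)
        (G : (k : Fin K) → Matrix (Fin (dt k)) (Fin dhat) ℝ),
        Zᵀ * Z = 1 ∧ t = ∑ k, frobSq (At k * G k - Z)}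
      ((K : ℝ) * (dhat : ℝ) - ∑ j : Fin dhat, μ (Fin.castLE hd j)) ∧
    ∀ O : Matrix (Fin dhat) (Fin dhat) ℝ, Oᵀ * O = 1 →
      (U.submatrix id (Fin.castLE hd) * O)ᵀ * (U.submatrix id (Fin.castLE hd) * O) = 1 ∧
      (∃ G : (k : Fin K) → Matrix (Fin (dt k)) (Fin dhat) ℝ,
        ∀ k, At k * G k = Q k * (Q k)ᵀ * (U.submatrix id (Fin.castLE hd) * O)) ∧
      ∀ G : (k : Fin K) → Matrix (Fin (dt k)) (Fin dhat) ℝ,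
        (∀ k, At k * G k = Q k * (Q k)ᵀ * (U.submatrix id (Fin.castLE hd) * O)) →
        ∑ k, frobSq (At k * G k - U.submatrix id (Fin.castLE hd) * O)
          = (K : ℝ) * (dhat : ℝ) - ∑ j : Fin dhat, μ (Fin.castLE hd j) := by
  simpa only [Fintype.card_fin, Fin.coe_castLEEmb, lkiLoss, frobeniusSq, frobSq] using
    stmt4_general At Q hQ hcol WQ hWQ U hU μ (Fin.castLEEmb hd) (le_castLEEmb_of_notMem_range hd hμ)
    hdiag
end

section
/- Let K_1, …, K_K be real symmetric positive semidefinite n×n matrices, λ > 0, S_k = (K_k + λI_n)⁻¹, M_λ = λ·Σ_{k=1}^K S_k, and d ≤ n. Let γ_1 ≤ … ≤ γ_n be the eigenvalues of M_λ counted with multiplicity. Then the minimum of Σ_{k=1}^K ( ‖K_kΓ_k − Z‖_F² + λ·tr(Γ_kᵀK_kΓ_k) ) over all Z ∈ ℝ^{n×d} with ZᵀZ = I_d and all Γ_k ∈ ℝ^{n×d} equals Σ_{j=1}^d γ_j. Moreover, for any d×d orthogonal matrix O, this minimum is attained at Z* = U_dO, where the columns of U_d are orthonormal eigenvectors of M_λ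 corresponding to γ_1, …, γ_d, with Γ_k = S_kZ* for each k. -/
open Matrix

/-!
Write `S = (K + λI)⁻¹`. For fixed `Z` the loss `Γ ↦ ‖KΓ - Z‖² + λ tr(ΓᵀKΓ)` is quadratic with
critical point `SZ`; completing the square leaves the nonnegative remainder `‖KΔ‖² + λ tr(ΔᵀKΔ)`
with `Δ = Γ - SZ`, and the value at `SZ` is `λ tr(ZᵀSZ)`. Eliminating every `Γ_k` therefore turns
the problem into minimising `tr(ZᵀM_λZ)` over `ZᵀZ = I`. With `W = UᵀZ` this trace is
`∑ γᵢ (WWᵀ)ᵢᵢ`, and the weights `(WWᵀ)ᵢᵢ` are diagonal entries of an orthogonal projection of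
trace `d`: they lie in `[0, 1]` and sum to `d`, so the average is least when they sit on the `d`
smallest eigenvalues.
-/

section MatrixIdentities

variable {R l m n : Type*} [CommSemiring R] [Fintype l]

lemma transpose_mul_mul_self_eq_one [Fintype m] [DecidableEq m] [DecidableEq n]
    {A : Matrix l m R} {B : Matrix m n R} (hA : Aᵀ * A = 1) (hB : Bᵀ * B = 1) :
    (A * B)ᵀ * (A * B) = 1 := by
  rw [transpose_mul, Matrix.mul_assoc, ← Matrix.mul_assoc Aᵀ, hA, Matrix.one_mul, hB]

lemma transpose_submatrix_mul_submatrix_eq_one [DecidableEq m] [DecidableEq n]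
    {U : Matrix l m R} (hU : Uᵀ * U = 1) {e : n → m} (he : Function.Injective e) :
    (U.submatrix id e)ᵀ * U.submatrix id e = 1 := by
  rw [transpose_submatrix, ← submatrix_mul _ _ e id e Function.bijective_id, hU,
    submatrix_one e he]

lemma transpose_submatrix_mul_conj_mul_submatrix [Fintype m] [DecidableEq m]
    {U : Matrix l m R} (hU : Uᵀ * U = 1) (D : Matrix m m R) (e : n → m) :
    (U.submatrix id e)ᵀ * (U * D * Uᵀ) * U.submatrix id e = D.submatrix e e := by
  have hconj : Uᵀ * (U * D * Uᵀ) * U = D := by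
    rw [Matrix.mul_assoc, Matrix.mul_assoc (U * D), hU, Matrix.mul_one, ← Matrix.mul_assoc, hU,
      Matrix.one_mul]
  calc (U.submatrix id e)ᵀ * (U * D * Uᵀ) * U.submatrix id e
      = (Uᵀ * (U * D * Uᵀ) * U).submatrix e e := rfl
    _ = D.submatrix e e := by rw [hconj]

lemma trace_transpose_mul_mul_mul_of_orthogonal [Fintype n] [DecidableEq n]
    (A : Matrix l l R) (V : Matrix l n R) {O : Matrix n n R} (hO : Oᵀ * O = 1) :
    ((V * O)ᵀ * A * (V * O)).trace = (Vᵀ * A * V).trace := by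
  have hO' : O * Oᵀ = 1 := mul_eq_one_comm.mp hO
  calc ((V * O)ᵀ * A * (V * O)).trace
      = (Oᵀ * (Vᵀ * A * V) * O).trace := by simp only [transpose_mul, Matrix.mul_assoc]
    _ = (O * Oᵀ * (Vᵀ * A * V)).trace := trace_mul_cycle _ _ _
    _ = (Vᵀ * A * V).trace := by rw [hO', Matrix.one_mul]

lemma trace_transpose_mul_conj_diagonal_mul_submatrix [Fintype m] [DecidableEq m] [Fintype n]
    [DecidableEq n] {U : Matrix l m R} (hU : Uᵀ * U = 1) (γ : m → R) (e : n → m)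
    {O : Matrix n n R} (hO : Oᵀ * O = 1) :
    ((U.submatrix id e * O)ᵀ * (U * diagonal γ * Uᵀ) * (U.submatrix id e * O)).trace
      = ∑ j, γ (e j) := by
  rw [trace_transpose_mul_mul_mul_of_orthogonal _ _ hO,
    transpose_submatrix_mul_conj_mul_submatrix hU]
  simp only [trace, diag_apply, submatrix_apply, diagonal_apply_eq]

lemma trace_transpose_mul_diagonal_mul [Fintype n] [DecidableEq l] (γ : l → R)
    (W : Matrix l n R) :
    (Wᵀ * diagonal γ * W).trace = ∑ i, γ i * (W * Wᵀ) i i := by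
  rw [Matrix.mul_assoc, trace_mul_comm, Matrix.mul_assoc]
  simp only [trace, diag_apply, diagonal_mul]

lemma isIdempotentElem_mul_transpose [Fintype n] [DecidableEq n] {W : Matrix l n R}
    (hW : Wᵀ * W = 1) :
    IsIdempotentElem (W * Wᵀ) := by
  rw [IsIdempotentElem, Matrix.mul_assoc, ← Matrix.mul_assoc Wᵀ, hW, Matrix.one_mul]

end MatrixIdentities

section KyFan

variable {R ι : Type*} [CommRing R] [LinearOrder R] [IsStrictOrderedRing R] [Fintype ι]

lemma diag_nonneg_of_isSymm_of_isIdempotentElem {P : Matrix ι ι R} (hsymm : P.IsSymm)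
    (hidem : IsIdempotentElem P) (i : ι) : 0 ≤ P i i := by
  have hdiag : P i i = ∑ j, P i j * P i j := by
    conv_lhs => rw [← hidem.eq, mul_apply]
    exact Finset.sum_congr rfl fun j _ => by rw [hsymm.apply i j]
  rw [hdiag]
  exact Finset.sum_nonneg fun j _ => mul_self_nonneg _

lemma diag_le_one_of_isSymm_of_isIdempotentElem {P : Matrix ι ι R} (hsymm : P.IsSymm)
    (hidem : IsIdempotentElem P) (i : ι) : P i i ≤ 1 := by
  classical
  have hcompl : 0 ≤ (1 - P) i i :=
    diag_nonneg_of_isSymm_of_isIdempotentElem (isSymm_one.sub hsymm) hidem.one_sub i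
  simpa only [Matrix.sub_apply, one_apply_eq, sub_nonneg] using hcompl

lemma sum_le_sum_mul_of_threshold {s : Finset ι} {γ w : ι → R} {c : R}
    (hle : ∀ i ∈ s, γ i ≤ c) (hge : ∀ i ∉ s, c ≤ γ i)
    (hw₀ : ∀ i, 0 ≤ w i) (hw₁ : ∀ i, w i ≤ 1) (hsum : ∑ i, w i = s.card) :
    ∑ i ∈ s, γ i ≤ ∑ i, γ i * w i := by
  classical
  have hinside : ∑ i ∈ s, (γ i - c) ≤ ∑ i ∈ s, (γ i - c) * w i :=
    Finset.sum_le_sum fun i hi =>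
      le_mul_of_le_one_right (sub_nonpos.mpr (hle i hi)) (hw₁ i)
  have houtside : 0 ≤ ∑ i ∈ sᶜ, (γ i - c) * w i :=
    Finset.sum_nonneg fun i hi =>
      mul_nonneg (sub_nonneg.mpr (hge i (Finset.mem_compl.mp hi))) (hw₀ i)
  have hcentered : ∑ i ∈ s, (γ i - c) ≤ ∑ i, (γ i - c) * w i := by
    rw [← Finset.sum_add_sum_compl s]
    linarith
  simp only [sub_mul, Finset.sum_sub_distrib, ← Finset.mul_sum, hsum, Finset.sum_const,
    nsmul_eq_mul] at hcentered
  linarith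

lemma exists_threshold_of_monotone {α : Type*} [LinearOrder α] [Nonempty α] {n : ℕ}
    {γ : Fin n → α} (hγ : Monotone γ) (d : ℕ) :
    ∃ c, (∀ i : Fin n, (i : ℕ) < d → γ i ≤ c) ∧ ∀ i : Fin n, d ≤ i → c ≤ γ i := by
  rcases lt_or_ge d n with hdn | hnd
  · exact ⟨γ ⟨d, hdn⟩, fun i hi => hγ (Fin.le_def.mpr hi.le), fun i hi => hγ (Fin.le_def.mpr hi)⟩
  · obtain ⟨c, hc⟩ := (Set.finite_range γ).bddAbove
    exact ⟨c, fun i _ => hc (Set.mem_range_self i), fun i hi => by omega⟩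

lemma sum_castLE_le_sum_mul_of_monotone {n d : ℕ} (hd : d ≤ n) {γ w : Fin n → R}
    (hγ : Monotone γ) (hw₀ : ∀ i, 0 ≤ w i) (hw₁ : ∀ i, w i ≤ 1) (hsum : ∑ i, w i = d) :
    ∑ j : Fin d, γ (Fin.castLE hd j) ≤ ∑ i, γ i * w i := by
  obtain ⟨c, hle, hge⟩ := exists_threshold_of_monotone hγ d
  let initial : Finset (Fin n) := Finset.univ.map (Fin.castLEEmb hd)
  have hmem (i : Fin n) : i ∈ initial ↔ (i : ℕ) < d := by
    simp only [initial, Finset.mem_map, Finset.mem_univ, true_and, Fin.castLEEmb_apply]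
    exact ⟨fun ⟨j, hj⟩ => hj ▸ j.isLt, fun hi => ⟨⟨i, hi⟩, rfl⟩⟩
  have hcard : initial.card = d := by
    rw [Finset.card_map, Finset.card_univ, Fintype.card_fin]
  calc ∑ j : Fin d, γ (Fin.castLE hd j)
      = ∑ i ∈ initial, γ i := by simp only [initial, Finset.sum_map, Fin.castLEEmb_apply]
    _ ≤ ∑ i, γ i * w i := sum_le_sum_mul_of_threshold
        (fun i hi => hle i ((hmem i).mp hi))
        (fun i hi => hge i (not_lt.mp ((hmem i).not.mp hi))) hw₀ hw₁ (by rw [hsum, hcard])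

theorem kyFan_sum_le_trace_diagonal {n d : ℕ} (hd : d ≤ n) {γ : Fin n → R} (hγ : Monotone γ)
    {W : Matrix (Fin n) (Fin d) R} (hW : Wᵀ * W = 1) :
    ∑ j : Fin d, γ (Fin.castLE hd j) ≤ (Wᵀ * diagonal γ * W).trace := by
  have hsymm : (W * Wᵀ).IsSymm := by
    rw [IsSymm, transpose_mul, transpose_transpose]
  have hidem : IsIdempotentElem (W * Wᵀ) := isIdempotentElem_mul_transpose hW
  have htrace : (W * Wᵀ).trace = d := by
    rw [trace_mul_comm, hW, trace_one, Fintype.card_fin]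
  rw [trace_transpose_mul_diagonal_mul]
  exact sum_castLE_le_sum_mul_of_monotone hd hγ
    (diag_nonneg_of_isSymm_of_isIdempotentElem hsymm hidem)
    (diag_le_one_of_isSymm_of_isIdempotentElem hsymm hidem) htrace

theorem kyFan_sum_le_trace {n d : ℕ} (hd : d ≤ n) {U : Matrix (Fin n) (Fin n) R}
    (hU : Uᵀ * U = 1) {γ : Fin n → R} (hγ : Monotone γ)
    {Z : Matrix (Fin n) (Fin d) R} (hZ : Zᵀ * Z = 1) :
    ∑ j : Fin d, γ (Fin.castLE hd j) ≤ (Zᵀ * (U * diagonal γ * Uᵀ) * Z).trace := by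
  have hUt : Uᵀᵀ * Uᵀ = 1 := mul_eq_one_comm.mp hU
  have hW : (Uᵀ * Z)ᵀ * (Uᵀ * Z) = 1 := transpose_mul_mul_self_eq_one hUt hZ
  simpa only [transpose_mul, transpose_transpose, Matrix.mul_assoc] using
    kyFan_sum_le_trace_diagonal hd hγ hW

end KyFan

section KernelRidge

variable {n d : ℕ} {K : Matrix (Fin n) (Fin n) ℝ} {lam : ℝ}

/-- The kernel ridge regression loss `‖KΓ - Z‖_F² + λ tr(ΓᵀKΓ)` of the dual coefficients `Γ`
against the target `Z`: the contribution of one kernel to the NKI objective. -/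
noncomputable def kernelRidgeLoss (K : Matrix (Fin n) (Fin n) ℝ) (lam : ℝ)
    (Z G : Matrix (Fin n) (Fin d) ℝ) : ℝ :=
  frobSq (K * G - Z) + lam * (Gᵀ * K * G).trace

lemma frobSq_nonneg (M : Matrix (Fin n) (Fin d) ℝ) : 0 ≤ frobSq M :=
  (posSemidef_conjTranspose_mul_self M).trace_nonneg

lemma kernelRidgeLoss_nonneg (hK : K.PosSemidef) (hlam : 0 ≤ lam)
    (Z G : Matrix (Fin n) (Fin d) ℝ) : 0 ≤ kernelRidgeLoss K lam Z G :=
  add_nonneg (frobSq_nonneg _) (mul_nonneg hlam (hK.conjTranspose_mul_mul_same G).trace_nonneg)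

lemma kernelRidgeLoss_add_of_normal_equation (hK : K.IsSymm) {Y Z : Matrix (Fin n) (Fin d) ℝ}
    (hY : (K + lam • 1) * Y = Z) (D : Matrix (Fin n) (Fin d) ℝ) :
    kernelRidgeLoss K lam Z (Y + D)
      = lam * (Yᵀ * Z).trace + kernelRidgeLoss K lam 0 D := by
  subst hY
  have hresidual : K * (Y + D) - (K + lam • 1) * Y = K * D - lam • Y := by
    rw [Matrix.mul_add, Matrix.add_mul, Matrix.smul_mul, Matrix.one_mul]
    abel
  have hcross : (Yᵀ * K * D).trace = (Dᵀ * K * Y).trace := by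
    rw [← trace_transpose]
    simp only [transpose_mul, transpose_transpose, hK.eq, Matrix.mul_assoc]
  rw [kernelRidgeLoss, kernelRidgeLoss, hresidual]
  simp only [frobSq, transpose_sub, transpose_add, transpose_mul, transpose_smul, hK.eq,
    Matrix.mul_add, Matrix.add_mul, Matrix.mul_sub, Matrix.sub_mul, Matrix.smul_mul,
    Matrix.mul_smul, trace_add, trace_sub, trace_smul, smul_eq_mul, Matrix.one_mul, sub_zero,
    ← Matrix.mul_assoc, hcross]
  ring

lemma isUnit_det_add_smul_one (hK : K.PosSemidef) (hlam : 0 < lam) :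
    IsUnit (K + lam • 1).det :=
  (isUnit_iff_isUnit_det _).mp (PosDef.posSemidef_add hK (PosDef.one.smul hlam)).isUnit

lemma kernelRidgeLoss_eq_trace_add (hK : K.PosSemidef) (hlam : 0 < lam)
    (Z G : Matrix (Fin n) (Fin d) ℝ) :
    kernelRidgeLoss K lam Z G = (Zᵀ * (lam • (K + lam • 1)⁻¹) * Z).trace
      + kernelRidgeLoss K lam 0 (G - (K + lam • 1)⁻¹ * Z) := by
  have hsymm : K.IsSymm := hK.isHermitian
  have hsymm_inv : ((K + lam • 1)⁻¹)ᵀ = (K + lam • 1)⁻¹ := by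
    rw [transpose_nonsing_inv, (hsymm.add (isSymm_one.smul lam)).eq]
  have hnormal : (K + lam • 1) * ((K + lam • 1)⁻¹ * Z) = Z :=
    mul_nonsing_inv_cancel_left _ _ (isUnit_det_add_smul_one hK hlam)
  have hsplit := kernelRidgeLoss_add_of_normal_equation hsymm hnormal (G - (K + lam • 1)⁻¹ * Z)
  rwa [add_sub_cancel, transpose_mul, hsymm_inv, ← smul_eq_mul, ← trace_smul, ← Matrix.smul_mul,
    ← Matrix.mul_smul] at hsplit

end KernelRidge

section KernelIntegration

variable {n d : ℕ} {ι : Type*} [Fintype ι] {Ks : ι → Matrix (Fin n) (Fin n) ℝ} {lam : ℝ}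

/-- The objective of the nonlinear kernel integration (NKI) problem, as a function of the target
representation `Z` and the family `G` of dual coefficient matrices `Γ_k`. -/
noncomputable def nkiObjective (Ks : ι → Matrix (Fin n) (Fin n) ℝ) (lam : ℝ)
    (Z : Matrix (Fin n) (Fin d) ℝ) (G : ι → Matrix (Fin n) (Fin d) ℝ) : ℝ :=
  ∑ k, kernelRidgeLoss (Ks k) lam Z (G k)

lemma nkiObjective_eq_trace_add (hKs : ∀ k, (Ks k).PosSemidef) (hlam : 0 < lam)
    (Z : Matrix (Fin n) (Fin d) ℝ) (G : ι → Matrix (Fin n) (Fin d) ℝ) :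
    nkiObjective Ks lam Z G = (Zᵀ * (lam • ∑ k, (Ks k + lam • 1)⁻¹) * Z).trace
      + nkiObjective Ks lam 0 fun k => G k - (Ks k + lam • 1)⁻¹ * Z := by
  simp only [nkiObjective]
  rw [Finset.smul_sum, Matrix.mul_sum, Matrix.sum_mul, trace_sum, ← Finset.sum_add_distrib]
  exact Finset.sum_congr rfl fun k _ => kernelRidgeLoss_eq_trace_add (hKs k) hlam Z (G k)

theorem trace_le_nkiObjective (hKs : ∀ k, (Ks k).PosSemidef) (hlam : 0 < lam)
    (Z : Matrix (Fin n) (Fin d) ℝ) (G : ι → Matrix (Fin n) (Fin d) ℝ) :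
    (Zᵀ * (lam • ∑ k, (Ks k + lam • 1)⁻¹) * Z).trace ≤ nkiObjective Ks lam Z G := by
  rw [nkiObjective_eq_trace_add hKs hlam]
  exact le_add_of_nonneg_right
    (Finset.sum_nonneg fun k _ => kernelRidgeLoss_nonneg (hKs k) hlam.le _ _)

theorem nkiObjective_inv_mul (hKs : ∀ k, (Ks k).PosSemidef) (hlam : 0 < lam)
    (Z : Matrix (Fin n) (Fin d) ℝ) :
    nkiObjective Ks lam Z (fun k => (Ks k + lam • 1)⁻¹ * Z)
      = (Zᵀ * (lam • ∑ k, (Ks k + lam • 1)⁻¹) * Z).trace := by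
  rw [nkiObjective_eq_trace_add hKs hlam]
  simp [nkiObjective, kernelRidgeLoss, frobSq]

end KernelIntegration

/-- Theorem 2 + Ky Fan minimum principle: with `S_k = (K_k + λI)⁻¹`,
`M_λ = λ·Σ_k S_k = U diag(γ) Uᵀ` an orthogonal eigendecomposition with `γ` monotone, the
minimum of `Σ_k (‖K_kΓ_k − Z‖_F² + λ·tr(Γ_kᵀK_kΓ_k))` over `ZᵀZ = I` and all `Γ_k` equals
the sum of the `d` smallest eigenvalues of `M_λ`, and for any orthogonal `O` it is attained
at `Z* = U_dO` with `Γ_k = S_kZ*`. -/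
theorem stmt11 {n d Kn : ℕ} (hd : d ≤ n)
    (Ks : Fin Kn → Matrix (Fin n) (Fin n) ℝ) (hKs : ∀ k, (Ks k).PosSemidef)
    (lam : ℝ) (hlam : 0 < lam)
    (U : Matrix (Fin n) (Fin n) ℝ) (hU : Uᵀ * U = 1)
    (γ : Fin n → ℝ) (hγ : Monotone γ)
    (hdiag : (lam • ∑ k, (Ks k + lam • 1)⁻¹ : Matrix (Fin n) (Fin n) ℝ)
        = U * Matrix.diagonal γ * Uᵀ) :
    IsLeast {t : ℝ | ∃ (Z : Matrix (Fin n) (Fin d) ℝ)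
        (G : Fin Kn → Matrix (Fin n) (Fin d) ℝ),
        Zᵀ * Z = 1 ∧
        t = ∑ k, (frobSq (Ks k * G k - Z) + lam * ((G k)ᵀ * Ks k * G k).trace)}
      (∑ j : Fin d, γ (Fin.castLE hd j)) ∧
    ∀ O : Matrix (Fin d) (Fin d) ℝ, Oᵀ * O = 1 →
      (U.submatrix id (Fin.castLE hd) * O)ᵀ * (U.submatrix id (Fin.castLE hd) * O) = 1 ∧
      ∑ k, (frobSq (Ks k * ((Ks k + lam • 1)⁻¹ * (U.submatrix id (Fin.castLE hd) * O))
              - U.submatrix id (Fin.castLE hd) * O)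
          + lam * (((Ks k + lam • 1)⁻¹ * (U.submatrix id (Fin.castLE hd) * O))ᵀ
              * Ks k * ((Ks k + lam • 1)⁻¹ * (U.submatrix id (Fin.castLE hd) * O))).trace)
        = ∑ j : Fin d, γ (Fin.castLE hd j) := by
  have hattained (O : Matrix (Fin d) (Fin d) ℝ) (hO : Oᵀ * O = 1) :
      (U.submatrix id (Fin.castLE hd) * O)ᵀ * (U.submatrix id (Fin.castLE hd) * O) = 1 ∧
      nkiObjective Ks lam (U.submatrix id (Fin.castLE hd) * O)
          (fun k => (Ks k + lam • 1)⁻¹ * (U.submatrix id (Fin.castLE hd) * O))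
        = ∑ j : Fin d, γ (Fin.castLE hd j) := by
    refine ⟨transpose_mul_mul_self_eq_one
      (transpose_submatrix_mul_submatrix_eq_one hU (Fin.castLE_injective hd)) hO, ?_⟩
    rw [nkiObjective_inv_mul hKs hlam, hdiag,
      trace_transpose_mul_conj_diagonal_mul_submatrix hU γ _ hO]
  refine ⟨⟨?_, ?_⟩, hattained⟩
  · obtain ⟨hZ, hvalue⟩ := hattained 1 (by rw [transpose_one, Matrix.one_mul])
    exact ⟨_, _, hZ, hvalue.symm⟩
  · rintro _ ⟨Z, G, hZ, rfl⟩
    calc ∑ j : Fin d, γ (Fin.castLE hd j)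
        ≤ (Zᵀ * (U * diagonal γ * Uᵀ) * Z).trace := kyFan_sum_le_trace hd hU hγ hZ
      _ = (Zᵀ * (lam • ∑ k, (Ks k + lam • 1)⁻¹) * Z).trace := by rw [hdiag]
      _ ≤ nkiObjective Ks lam Z G := trace_le_nkiObjective hKs hlam Z G
end
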